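/- arXiv:2211.05356 — 2 statements merged into one kernel-verified Lean document; each statement's English description precedes it below -/
import Mathlib

section
/- For every subset I ⊆ Δ of the simple roots, ⟨δ, δ_I⟩ = ⟨δ_I, δ_I⟩. -/
open scoped RealInnerProductSpace BigOperators

/-- A reduced crystallographic root system `Φ` in a real inner product space `E`,
together with a base (set of simple roots) `Δ`. -/
structure RootSystemBase (E : Type*) [NormedAddCommGroup E] [InnerProductSpace ℝ E] where
  /-- the set of roots -/
  Φ : Finset E
  /-- the set of simple roots (a base) -/
  Δ : Finset E
  spanning : Submodule.span ℝ (Φ : Set E) = ⊤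
  zero_not_mem : (0 : E) ∉ Φ
  reduced : ∀ α ∈ Φ, ∀ t : ℝ, t • α ∈ Φ → t = 1 ∨ t = -1
  crystallographic : ∀ α ∈ Φ, ∀ β ∈ Φ, ∃ k : ℤ, 2 * ⟪β, α⟫ / ⟪α, α⟫ = (k : ℝ)
  reflection_mem : ∀ α ∈ Φ, ∀ β ∈ Φ, β - (2 * ⟪β, α⟫ / ⟪α, α⟫) • α ∈ Φ
  base_subset : Δ ⊆ Φ
  base_indep : LinearIndependent ℝ (fun a : {x : E // x ∈ Δ} => a.1)
  base_gen : ∀ β ∈ Φ, ∃ c : E → ℤ,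
      ((∀ α ∈ Δ, 0 ≤ c α) ∨ (∀ α ∈ Δ, c α ≤ 0)) ∧ β = ∑ α ∈ Δ, (c α : ℝ) • α

namespace RootSystemBase

variable {E : Type*} [NormedAddCommGroup E] [InnerProductSpace ℝ E]

-- The set `Φ⁺` of positive roots: the roots whose coefficients on the base `Δ`
-- are nonnegative integers.
open Classical in
noncomputable def posRoots (R : RootSystemBase E) : Finset E :=
  R.Φ.filter fun β => ∃ c : E → ℤ, (∀ α ∈ R.Δ, 0 ≤ c α) ∧ β = ∑ α ∈ R.Δ, (c α : ℝ) • α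

-- The Weyl vector `δ`, the half-sum of the positive roots.
noncomputable def weyl (R : RootSystemBase E) : E :=
  (1 / 2 : ℝ) • ∑ α ∈ R.posRoots, α

-- For a subset `I ⊆ Δ` of the simple roots, `δ_I` is the half-sum of the
-- positive roots not lying in the `ℤ`-span of `I`.
open Classical in
noncomputable def deltaI (R : RootSystemBase E) (I : Finset E) : E :=
  (1 / 2 : ℝ) • ∑ α ∈ R.posRoots.filter (fun β => β ∉ Submodule.span ℤ (I : Set E)), α

end RootSystemBase

namespace RootSystemBase

variable {E : Type*} [NormedAddCommGroup E] [InnerProductSpace ℝ E]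

theorem coeff_zero_aux (R : RootSystemBase E) (f : E → ℝ)
    (h : ∑ i ∈ R.Δ, f i • i = 0) : ∀ i ∈ R.Δ, f i = 0 := by
  have h1 : LinearIndepOn ℝ (id : E → E) (R.Δ : Set E) := R.base_indep
  rw [linearIndepOn_finset_iff] at h1
  exact h1 f h

theorem refl_mem_aux (R : RootSystemBase E) (I : Finset E) (hI : I ⊆ R.Δ)
    (α : E) (hα : α ∈ I) (β : E) (hβ : β ∈ R.posRoots)
    (hβI : β ∉ Submodule.span ℤ (I : Set E)) :
    (β - (2 * ⟪β, α⟫ / ⟪α, α⟫) • α) ∈ R.posRoots ∧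
    (β - (2 * ⟪β, α⟫ / ⟪α, α⟫) • α) ∉ Submodule.span ℤ (I : Set E) := by
  classical
  have hαΦ := R.base_subset (hI hα)
  simp only [posRoots, Finset.mem_filter] at hβ
  obtain ⟨hβΦ, c, hc, hcβ⟩ := hβ
  have hr := R.reflection_mem α hαΦ β hβΦ
  obtain ⟨k, hk⟩ := R.crystallographic α hαΦ β hβΦ
  rw [hk] at hr ⊢
  have hkα : (k : ℝ) • α ∈ Submodule.span ℤ (I : Set E) := by
    rw [Int.cast_smul_eq_zsmul]
    exact Submodule.smul_mem _ _ (Submodule.subset_span hα)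
  constructor
  · obtain ⟨γ, hγ, hγI, hγc⟩ : ∃ γ ∈ R.Δ, γ ∉ I ∧ c γ ≠ 0 := by
      by_contra! hcon
      apply hβI
      rw [hcβ]
      refine Submodule.sum_mem _ fun γ hγ => ?_
      rw [Int.cast_smul_eq_zsmul]
      by_cases h : γ ∈ I
      · exact Submodule.smul_mem _ _ (Submodule.subset_span h)
      · rw [hcon γ hγ h, zero_smul]; exact Submodule.zero_mem _
    simp only [posRoots, Finset.mem_filter]
    refine ⟨hr, ?_⟩
    obtain ⟨d, hd, hdβ⟩ := R.base_gen _ hr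
    rcases hd with hd | hd
    · exact ⟨d, hd, hdβ⟩
    · exfalso
      have hz := R.coeff_zero_aux
        (fun i => (c i : ℝ) - (if i = α then (k : ℝ) else 0) - d i) (by
          simp only [sub_smul, Finset.sum_sub_distrib, ite_smul, zero_smul,
            Finset.sum_ite_eq', if_pos (hI hα)]
          rw [← hcβ, ← hdβ, sub_self]) γ hγ
      have hne : γ ≠ α := fun h => hγI (h ▸ hα)
      simp only [if_neg hne, sub_zero] at hz
      have hz' : c γ = d γ := by exact_mod_cast sub_eq_zero.mp hz
      have h1 := hc γ hγ
      have h2 := hd γ hγ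
      omega
  · intro h
    apply hβI
    have := Submodule.add_mem _ h hkα
    simpa using this

theorem inner_deltaI_aux (R : RootSystemBase E) (I : Finset E) (hI : I ⊆ R.Δ)
    (α : E) (hα : α ∈ I) : ⟪α, R.deltaI I⟫ = 0 := by
  classical
  have hαΦ := R.base_subset (hI hα)
  have hα0 : α ≠ 0 := fun h => R.zero_not_mem (h ▸ hαΦ)
  have hαα : ⟪α, α⟫ ≠ 0 := inner_self_ne_zero.mpr hα0
  have key : ∀ β : E, ⟪α, β - (2 * ⟪β, α⟫ / ⟪α, α⟫) • α⟫ = - ⟪α, β⟫ := by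
    intro β
    rw [inner_sub_right, inner_smul_right, div_mul_cancel₀ _ hαα, real_inner_comm α β]
    ring
  unfold deltaI
  rw [inner_smul_right, inner_sum]
  refine mul_eq_zero_of_right _ ?_
  refine Finset.sum_involution (fun β _ => β - (2 * ⟪β, α⟫ / ⟪α, α⟫) • α) ?_ ?_ ?_ ?_
  · intro β _
    rw [key, add_neg_cancel]
  · intro β _ hne heq
    have := key β
    rw [heq] at this
    exact hne (by linarith)
  · intro β hβ
    rw [Finset.mem_filter] at hβ ⊢
    exact R.refl_mem_aux I hI α hα β hβ.1 hβ.2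
  · intro β _
    have h := key β
    rw [real_inner_comm, real_inner_comm β α] at h
    simp only [h]
    rw [mul_neg, neg_div, neg_smul]
    abel

end RootSystemBase

/-- For every subset `I ⊆ Δ` of the simple roots, `⟨δ, δ_I⟩ = ⟨δ_I, δ_I⟩`. -/
theorem inner_weyl_deltaI_eq_inner_deltaI_deltaI {E : Type*} [NormedAddCommGroup E]
    [InnerProductSpace ℝ E] [FiniteDimensional ℝ E]
    (R : RootSystemBase E) (I : Finset E) (hI : I ⊆ R.Δ) :
    ⟪R.weyl, R.deltaI I⟫ = ⟪R.deltaI I, R.deltaI I⟫ := by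
  classical
  have hspan : ∀ x ∈ Submodule.span ℤ (I : Set E), ⟪x, R.deltaI I⟫ = 0 := by
    intro x hx
    induction hx using Submodule.span_induction with
    | mem x h => exact R.inner_deltaI_aux I hI x h
    | zero => exact inner_zero_left _
    | add x y _ _ hx hy => rw [inner_add_left, hx, hy, add_zero]
    | smul a x _ hx => rw [← Int.cast_smul_eq_zsmul ℝ, inner_smul_left, hx, mul_zero]
  have hsplit : R.weyl = R.deltaI I +
      (1 / 2 : ℝ) • ∑ α ∈ R.posRoots.filter
        (fun β => ¬ (β ∉ Submodule.span ℤ (I : Set E))), α := by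
    unfold RootSystemBase.weyl RootSystemBase.deltaI
    rw [← smul_add]
    congr 1
    convert (Finset.sum_filter_add_sum_filter_not R.posRoots
      (fun β => β ∉ Submodule.span ℤ (I : Set E)) (fun x => x)).symm
  rw [hsplit, inner_add_left, inner_smul_left, sum_inner, Finset.sum_eq_zero, mul_zero, add_zero]
  intro x hx
  rw [Finset.mem_filter, not_not] at hx
  exact hspan x hx.2
end

section
/- Let I ⊆ Δ be a subset with δ_I ≠ 0, let k and ℓ be nonzero integers, and set μ := (2k/ℓ)·δ_I. Then 2⟨δ, μ⟩ / ⟨μ, μ⟩ = ℓ/k. -/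
open scoped RealInnerProductSpace BigOperators

open Classical in
theorem refl_mem_aux {E : Type*} [NormedAddCommGroup E] [InnerProductSpace ℝ E]
    (R : RootSystemBase E) (I : Finset E) (hI : I ⊆ R.Δ) (a : E) (ha : a ∈ I)
    (b : E) (hb : b ∈ R.posRoots.filter (fun β => β ∉ Submodule.span ℤ (I : Set E))) :
    b - (2 * ⟪b, a⟫ / ⟪a, a⟫) • a ∈
      R.posRoots.filter (fun β => β ∉ Submodule.span ℤ (I : Set E)) := by
  have haI : a ∈ Submodule.span ℤ (I : Set E) := Submodule.subset_span (by exact_mod_cast ha)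
  rw [Finset.mem_filter, RootSystemBase.posRoots, Finset.mem_filter] at hb ⊢
  obtain ⟨⟨hbΦ, c, hc, hbc⟩, hbI⟩ := hb
  have haΦ := R.base_subset (hI ha)
  have hr := R.reflection_mem a haΦ b hbΦ
  obtain ⟨m, hm⟩ := R.crystallographic a haΦ b hbΦ
  rw [hm] at hr ⊢
  have hma : (m : ℝ) • a ∈ Submodule.span ℤ (I : Set E) := by
    rw [Int.cast_smul_eq_zsmul]
    exact Submodule.smul_mem _ m haI
  refine ⟨⟨hr, ?_⟩, fun h => hbI ?_⟩
  · obtain ⟨d, hd | hd, hbd⟩ := R.base_gen _ hr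
    · exact ⟨d, hd, hbd⟩
    · exfalso
      apply hbI
      have hli := (linearIndepOn_finset_iff (R := ℝ) (v := (id : E → E)) (s := R.Δ)).1
        R.base_indep (fun γ => (c γ : ℝ) - (if γ = a then (m : ℝ) else 0) - d γ) (by
          simp only [id, sub_smul, Finset.sum_sub_distrib, ite_smul, zero_smul,
            Finset.sum_ite_eq', if_pos (hI ha)]
          rw [← hbc, ← hbd]
          simp)
      have hz : ∀ γ ∈ R.Δ, γ ≠ a → (c γ : ℝ) • γ = 0 := by
        intro γ hγ hne
        have h1 := hli γ hγ
        simp only [hne, if_false, sub_zero] at h1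
        have h2 : c γ = d γ := by exact_mod_cast sub_eq_zero.1 h1
        have h3 : c γ = 0 := le_antisymm (h2 ▸ hd γ hγ) (hc γ hγ)
        simp [h3]
      rw [hbc, Finset.sum_eq_single_of_mem a (hI ha) hz, Int.cast_smul_eq_zsmul]
      exact Submodule.smul_mem _ _ haI
  · have := Submodule.add_mem _ h hma
    simpa using this

theorem inner_deltaI_aux {E : Type*} [NormedAddCommGroup E] [InnerProductSpace ℝ E]
    (R : RootSystemBase E) (I : Finset E) (hI : I ⊆ R.Δ) (a : E) (ha : a ∈ I) :
    ⟪R.deltaI I, a⟫ = 0 := by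
  classical
  have ha0 : a ≠ 0 := fun h => R.zero_not_mem (h ▸ R.base_subset (hI ha))
  have haa : ⟪a, a⟫ ≠ 0 := inner_self_ne_zero.2 ha0
  have hs : ∀ b : E, ⟪b - (2 * ⟪b, a⟫ / ⟪a, a⟫) • a, a⟫ = - ⟪b, a⟫ := by
    intro b
    rw [inner_sub_left, real_inner_smul_left]
    field_simp
    ring
  rw [RootSystemBase.deltaI, real_inner_smul_left, sum_inner]
  refine mul_eq_zero_of_right _ ?_
  refine Finset.sum_involution (fun b _ => b - (2 * ⟪b, a⟫ / ⟪a, a⟫) • a) ?_ ?_ ?_ ?_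
  · intro b _
    rw [hs]; ring
  · intro b _ hb h
    have := hs b
    rw [h] at this
    exact hb (by linarith)
  · intro b hb
    convert refl_mem_aux R I hI a ha b (by convert hb)
  · intro b _
    simp only [hs]
    rw [mul_neg, neg_div, neg_smul]
    abel

theorem inner_weyl_aux {E : Type*} [NormedAddCommGroup E] [InnerProductSpace ℝ E]
    (R : RootSystemBase E) (I : Finset E) (hI : I ⊆ R.Δ) :
    ⟪R.weyl, R.deltaI I⟫ = ⟪R.deltaI I, R.deltaI I⟫ := by
  classical
  have hsp : ∀ x ∈ Submodule.span ℤ (I : Set E), ⟪x, R.deltaI I⟫ = 0 := by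
    intro x hx
    induction hx using Submodule.span_induction with
    | mem x h => rw [real_inner_comm]; exact inner_deltaI_aux R I hI x (by exact_mod_cast h)
    | zero => simp
    | add x y _ _ hx hy => rw [inner_add_left, hx, hy, add_zero]
    | smul n x _ hx => rw [← Int.cast_smul_eq_zsmul ℝ, real_inner_smul_left, hx, mul_zero]
  have hw : R.weyl = R.deltaI I + (1 / 2 : ℝ) •
      ∑ α ∈ R.posRoots.filter (fun β => ¬ β ∉ Submodule.span ℤ (I : Set E)), α := by
    rw [RootSystemBase.weyl, RootSystemBase.deltaI, ← smul_add]
    congr 1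
    rw [← Finset.sum_filter_add_sum_filter_not R.posRoots
      (fun β => β ∉ Submodule.span ℤ (I : Set E))]
  rw [hw, inner_add_left, real_inner_smul_left, sum_inner, Finset.sum_eq_zero, mul_zero, add_zero]
  intro x hx
  exact hsp x (not_not.1 (Finset.mem_filter.1 hx).2)

/-- Let `I ⊆ Δ` with `δ_I ≠ 0`, let `k, ℓ` be nonzero integers, and set
`μ := (2k/ℓ)·δ_I`. Then `2⟨δ, μ⟩/⟨μ, μ⟩ = ℓ/k`. -/
theorem pairing_of_mu {E : Type*} [NormedAddCommGroup E]
    [InnerProductSpace ℝ E] [FiniteDimensional ℝ E]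
    (R : RootSystemBase E) (I : Finset E) (hI : I ⊆ R.Δ) (hne : R.deltaI I ≠ 0)
    (k l : ℤ) (hk : k ≠ 0) (hl : l ≠ 0)
    (μ : E) (hμ : μ = ((2 * (k : ℝ)) / (l : ℝ)) • R.deltaI I) :
    2 * ⟪R.weyl, μ⟫ / ⟪μ, μ⟫ = (l : ℝ) / (k : ℝ) := by
  have h0 : ⟪R.deltaI I, R.deltaI I⟫ ≠ 0 := inner_self_ne_zero.2 hne
  have hk' : (k : ℝ) ≠ 0 := by exact_mod_cast hk
  have hl' : (l : ℝ) ≠ 0 := by exact_mod_cast hl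
  rw [hμ, real_inner_smul_left, real_inner_smul_right, real_inner_smul_right,
    inner_weyl_aux R I hI]
  field_simp
end
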